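/- Modified Klainerman–Sobolev inequality (outer region with boundary): for f ∈ C^∞, t ≥ 1, δ>0, and |x| ≥ t/4 with (t,x) in the region {t−|y| ≥ 2δ}, one has |f(t,x)| ≲ |f(t,B_t^x)| + t^{-1/2} ∑_{a≤1,|β|≤1}‖Ω^a∂^β f(t,·)‖_{L²(t/4 ≤ |y| ≤ t−2δ)}, where B_t^x is the point on the boundary sphere {|y|=t−2δ} on the ray from the origin through x. -/

import Mathlib

open MeasureTheory

/-- `∂_t f`. -/
noncomputable def pdt (f : ℝ × ℝ × ℝ → ℝ) (p : ℝ × ℝ × ℝ) : ℝ := fderiv ℝ f p (1, 0, 0)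
/-- `∂_1 f`. -/
noncomputable def pd1 (f : ℝ × ℝ × ℝ → ℝ) (p : ℝ × ℝ × ℝ) : ℝ := fderiv ℝ f p (0, 1, 0)
/-- `∂_2 f`. -/
noncomputable def pd2 (f : ℝ × ℝ × ℝ → ℝ) (p : ℝ × ℝ × ℝ) : ℝ := fderiv ℝ f p (0, 0, 1)

/-- The rotation field `Ω = x¹∂₂ − x²∂₁`. -/
noncomputable def Om (f : ℝ × ℝ × ℝ → ℝ) (p : ℝ × ℝ × ℝ) : ℝ :=
  p.2.1 * pd2 f p - p.2.2 * pd1 f p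

/-- `L²` norm of `g(t,·)` over the annulus `t/4 ≤ |y| ≤ t − 2δ`. -/
noncomputable def L2ann (g : ℝ × ℝ × ℝ → ℝ) (t δ : ℝ) : ℝ :=
  Real.sqrt (∫ y in {y : ℝ × ℝ |
      (t / 4) ^ 2 ≤ y.1 ^ 2 + y.2 ^ 2 ∧ y.1 ^ 2 + y.2 ^ 2 ≤ (t - 2 * δ) ^ 2},
    (g (t, y.1, y.2)) ^ 2)

/-!
On the ray through `x`, the fundamental theorem of calculus applied to `‖u‖²` bounds `‖u(x)‖²` by
its value at the outer end of the ray plus the integral over the ray of `‖u‖² + ‖∂ᵣu‖²`. At each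
radius `r`, the one-dimensional Sobolev embedding on the circle of radius `r` bounds the integrand
at the point of the ray by the integral over the circle of the squares of `u`, `∇u` and of their
angular derivatives. Against the area element `r dr dθ` of the annulus this gains a factor
`1 / r ≤ 1 / a`, where `a` is the inner radius; for `a = t / 4` and after a square root this is the
weight `t ^ (-1/2)`.
-/

open Set Real

section Interval

variable {E : Type*} [NormedAddCommGroup E] [InnerProductSpace ℝ E] {g g' : ℝ → E} {a b u v : ℝ}

lemma norm_sq_le_norm_sq_add_integral (hg : ∀ s ∈ Icc a b, HasDerivAt g (g' s) s)
    (hg' : ContinuousOn g' (Icc a b)) (hu : u ∈ Icc a b) (hv : v ∈ Icc a b) :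
    ‖g u‖ ^ 2 ≤ ‖g v‖ ^ 2 + ∫ s in a..b, (‖g s‖ ^ 2 + ‖g' s‖ ^ 2) := by
  have hab : a ≤ b := hu.1.trans hu.2
  have hgc : ContinuousOn g (Icc a b) := fun s hs => (hg s hs).continuousAt.continuousWithinAt
  have hsub : uIcc v u ⊆ Icc a b := uIcc_subset_Icc hv hu
  have hint : IntervalIntegrable (fun s => ‖g s‖ ^ 2 + ‖g' s‖ ^ 2) volume a b :=
    ContinuousOn.intervalIntegrable_of_Icc hab (by fun_prop)
  have hint' : IntervalIntegrable (fun s => 2 * inner ℝ (g s) (g' s)) volume v u :=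
    ((continuousOn_const.mul (hgc.inner hg')).mono hsub).intervalIntegrable
  have hftc : ∫ s in v..u, 2 * inner ℝ (g s) (g' s) = ‖g u‖ ^ 2 - ‖g v‖ ^ 2 :=
    intervalIntegral.integral_eq_sub_of_hasDerivAt (fun s hs => (hg s (hsub hs)).norm_sq) hint'
  have hpt (s : ℝ) : ‖2 * inner ℝ (g s) (g' s)‖ ≤ ‖g s‖ ^ 2 + ‖g' s‖ ^ 2 := by
    rw [norm_mul, Real.norm_two, Real.norm_eq_abs]
    linarith [abs_real_inner_le_norm (g s) (g' s), two_mul_le_add_sq ‖g s‖ ‖g' s‖]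
  have hIoc : uIoc v u ⊆ uIoc a b := by
    rw [uIoc_of_le hab]
    exact Ioc_subset_Ioc (le_min hv.1 hu.1) (max_le hv.2 hu.2)
  rw [← sub_le_iff_le_add', ← hftc]
  calc ∫ s in v..u, 2 * inner ℝ (g s) (g' s)
      ≤ |∫ s in v..u, 2 * inner ℝ (g s) (g' s)| := le_abs_self _
    _ ≤ |∫ s in v..u, (‖g s‖ ^ 2 + ‖g' s‖ ^ 2)| :=
      intervalIntegral.norm_integral_le_abs_of_norm_le (.of_forall hpt)
        (hint.mono_set (hsub.trans_eq (uIcc_of_le hab).symm))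
    _ ≤ |∫ s in a..b, (‖g s‖ ^ 2 + ‖g' s‖ ^ 2)| :=
      intervalIntegral.abs_integral_mono_interval hIoc (.of_forall fun s => by positivity) hint
    _ = ∫ s in a..b, (‖g s‖ ^ 2 + ‖g' s‖ ^ 2) :=
      abs_of_nonneg (intervalIntegral.integral_nonneg hab fun s _ => by positivity)

lemma norm_sq_le_mul_integral (hab : a < b) (hg : ∀ s ∈ Icc a b, HasDerivAt g (g' s) s)
    (hg' : ContinuousOn g' (Icc a b)) (hu : u ∈ Icc a b) :
    ‖g u‖ ^ 2 ≤ (1 + (b - a)⁻¹) * ∫ s in a..b, (‖g s‖ ^ 2 + ‖g' s‖ ^ 2) := by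
  have hgc : ContinuousOn g (Icc a b) := fun s hs => (hg s hs).continuousAt.continuousWithinAt
  set I := ∫ s in a..b, (‖g s‖ ^ 2 + ‖g' s‖ ^ 2)
  have hint : IntervalIntegrable (fun s => ‖g s‖ ^ 2) volume a b :=
    ContinuousOn.intervalIntegrable_of_Icc hab.le (by fun_prop)
  have hle : ∫ s in a..b, ‖g s‖ ^ 2 ≤ I :=
    intervalIntegral.integral_mono_on hab.le hint
      (ContinuousOn.intervalIntegrable_of_Icc hab.le (by fun_prop))
      fun s _ => le_add_of_nonneg_right (sq_nonneg _)
  have havg : (b - a) * ‖g u‖ ^ 2 ≤ (b - a + 1) * I :=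
    calc (b - a) * ‖g u‖ ^ 2 = ∫ _s in a..b, ‖g u‖ ^ 2 := by
          rw [intervalIntegral.integral_const, smul_eq_mul]
      _ ≤ ∫ s in a..b, (‖g s‖ ^ 2 + I) :=
        intervalIntegral.integral_mono_on hab.le intervalIntegrable_const
          (hint.add intervalIntegrable_const)
          fun s hs => norm_sq_le_norm_sq_add_integral hg hg' hu hs
      _ = (∫ s in a..b, ‖g s‖ ^ 2) + (b - a) * I := by
        rw [intervalIntegral.integral_add hint intervalIntegrable_const,
          intervalIntegral.integral_const, smul_eq_mul]
      _ ≤ (b - a + 1) * I := by linarith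
  have hba : 0 < b - a := sub_pos.2 hab
  rw [show 1 + (b - a)⁻¹ = (b - a + 1) / (b - a) by field_simp, div_mul_eq_mul_div, le_div_iff₀ hba]
  linarith

end Interval

/-- The closed annulus `a ≤ |y| ≤ b` in the plane, for nonnegative radii. Squared radii are used
because the norm of `ℝ × ℝ` is the sup norm. -/
def annulus (a b : ℝ) : Set (ℝ × ℝ) :=
  {y | a ^ 2 ≤ y.1 ^ 2 + y.2 ^ 2 ∧ y.1 ^ 2 + y.2 ^ 2 ≤ b ^ 2}

lemma isClosed_annulus (a b : ℝ) : IsClosed (annulus a b) := by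
  rw [annulus, ofPred_and]
  exact (isClosed_le (by fun_prop) (by fun_prop)).inter (isClosed_le (by fun_prop) (by fun_prop))

lemma isCompact_annulus (a b : ℝ) : IsCompact (annulus a b) := by
  refine ((isCompact_Icc (a := -|b|) (b := |b|)).prod
    (isCompact_Icc (a := -|b|) (b := |b|))).of_isClosed_subset (isClosed_annulus a b) fun y hy => ?_
  exact ⟨abs_le.1 (sq_le_sq.1 (by linarith [hy.2, sq_nonneg y.2])),
    abs_le.1 (sq_le_sq.1 (by linarith [hy.2, sq_nonneg y.1]))⟩

section Polar

variable {a b r θ : ℝ}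

lemma polarCoord_symm_mem_annulus (ha : 0 ≤ a) (hb : 0 ≤ b) (hr : 0 ≤ r) :
    polarCoord.symm (r, θ) ∈ annulus a b ↔ r ∈ Icc a b := by
  have hnorm : (r * cos θ) ^ 2 + (r * sin θ) ^ 2 = r ^ 2 := by
    linear_combination r ^ 2 * sin_sq_add_cos_sq θ
  simp only [annulus, polarCoord_symm_apply, mem_ofPred_eq, hnorm, sq_le_sq₀ ha hr,
    sq_le_sq₀ hr hb, mem_Icc]

lemma exists_polarCoord_symm_eq (x : ℝ × ℝ) :
    ∃ θ ∈ Icc (-π) π, polarCoord.symm (√(x.1 ^ 2 + x.2 ^ 2), θ) = x := by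
  have hnorm : ‖(⟨x.1, x.2⟩ : ℂ)‖ = √(x.1 ^ 2 + x.2 ^ 2) := by
    rw [Complex.norm_def, Complex.normSq_mk, sq, sq]
  refine ⟨Complex.arg ⟨x.1, x.2⟩, ⟨(Complex.neg_pi_lt_arg _).le, Complex.arg_le_pi _⟩, ?_⟩
  rw [polarCoord_symm_apply, ← hnorm, Complex.norm_mul_cos_arg, Complex.norm_mul_sin_arg]

lemma polarCoord_symm_eq_div_mul (hr : r ≠ 0) (b θ : ℝ) :
    polarCoord.symm (b, θ) =
      (b / r * (polarCoord.symm (r, θ)).1, b / r * (polarCoord.symm (r, θ)).2) := by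
  simp only [polarCoord_symm_apply, ← mul_assoc, div_mul_cancel₀ b hr]

variable {F : Type*} [NormedAddCommGroup F] [NormedSpace ℝ F]

lemma setIntegral_annulus_eq_setIntegral_prod (h : ℝ × ℝ → F) (ha : 0 < a) (hb : 0 ≤ b) :
    ∫ y in annulus a b, h y =
      ∫ p in Icc a b ×ˢ Ioo (-π) π, p.1 • h (polarCoord.symm p) := by
  have hset : polarCoord.target ∩ polarCoord.symm ⁻¹' annulus a b = Icc a b ×ˢ Ioo (-π) π := by
    ext ⟨r, θ⟩
    refine ⟨fun ⟨⟨hr, hθ⟩, hmem⟩ => ⟨?_, hθ⟩, fun ⟨hr, hθ⟩ => ⟨⟨ha.trans_le hr.1, hθ⟩, ?_⟩⟩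
    · exact (polarCoord_symm_mem_annulus ha.le hb (mem_Ioi.1 hr).le).1 hmem
    · exact (polarCoord_symm_mem_annulus ha.le hb (ha.le.trans hr.1)).2 hr
  calc ∫ y in annulus a b, h y
      = ∫ p in polarCoord.target, (polarCoord.symm ⁻¹' annulus a b).indicator
          (fun p => p.1 • h (polarCoord.symm p)) p := by
        rw [← integral_indicator (isClosed_annulus a b).measurableSet,
          ← integral_comp_polarCoord_symm]
        simp only [indicator_smul_apply, indicator_comp_right, ← Function.comp_apply (f := h)]
    _ = ∫ p in Icc a b ×ˢ Ioo (-π) π, p.1 • h (polarCoord.symm p) := by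
        rw [setIntegral_indicator
          ((isClosed_annulus a b).preimage continuous_polarCoord_symm).measurableSet, hset]

lemma setIntegral_annulus_eq_integral_integral {h : ℝ × ℝ → F} (ha : 0 < a) (hab : a ≤ b)
    (hh : ContinuousOn h (annulus a b)) :
    ∫ y in annulus a b, h y =
      ∫ r in a..b, ∫ θ in -π..π, r • h (polarCoord.symm (r, θ)) := by
  have hmaps : MapsTo polarCoord.symm (Icc a b ×ˢ Icc (-π) π) (annulus a b) := fun p hp =>
    (polarCoord_symm_mem_annulus ha.le (ha.le.trans hab) (ha.le.trans hp.1.1)).2 hp.1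
  have hint : IntegrableOn (fun p : ℝ × ℝ => p.1 • h (polarCoord.symm p))
      (Icc a b ×ˢ Ioo (-π) π) :=
    (ContinuousOn.integrableOn_compact (isCompact_Icc.prod isCompact_Icc)
      (continuousOn_fst.smul (hh.comp continuous_polarCoord_symm.continuousOn hmaps))).mono_set
      (prod_mono_right Ioo_subset_Icc_self)
  rw [setIntegral_annulus_eq_setIntegral_prod h ha (ha.le.trans hab), Measure.volume_eq_prod,
    setIntegral_prod _ hint, intervalIntegral.integral_of_le hab, integral_Icc_eq_integral_Ioc]
  simp only [intervalIntegral.integral_of_le (neg_le_self pi_pos.le),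
    integral_Ioc_eq_integral_Ioo]

end Polar

section Planar

section NormedSpace

variable {F : Type*} [NormedAddCommGroup F] [NormedSpace ℝ F] {u : ℝ × ℝ → F} {r θ : ℝ}

/-- The angular derivative `Ωu = y¹∂₂u − y²∂₁u` of a function on the plane, the generator of
rotations. -/
noncomputable def angularDeriv (u : ℝ × ℝ → F) (y : ℝ × ℝ) : F :=
  fderiv ℝ u y (-y.2, y.1)

/-- The energy `‖u‖² + ‖Ωu‖²`, with `L²` norms over the annulus `a ≤ |y| ≤ b`, which controls `u` on
circles. -/
noncomputable def angularEnergy (u : ℝ × ℝ → F) (a b : ℝ) : ℝ :=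
  ∫ y in annulus a b, (‖u y‖ ^ 2 + ‖angularDeriv u y‖ ^ 2)

lemma continuous_angularDeriv (hu : ContDiff ℝ 1 u) : Continuous (angularDeriv u) :=
  (hu.continuous_fderiv one_ne_zero).clm_apply (by fun_prop)

lemma hasDerivAt_polarCoord_symm_angle
    (hu : DifferentiableAt ℝ u (polarCoord.symm (r, θ))) :
    HasDerivAt (fun θ => u (polarCoord.symm (r, θ)))
      (angularDeriv u (polarCoord.symm (r, θ))) θ := by
  have hc : HasDerivAt (fun θ => polarCoord.symm (r, θ)) (-(r * sin θ), r * cos θ) θ := by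
    simpa only [polarCoord_symm_apply, mul_neg] using
      ((hasDerivAt_cos θ).const_mul r).prodMk ((hasDerivAt_sin θ).const_mul r)
  exact hu.hasFDerivAt.comp_hasDerivAt θ hc

lemma hasDerivAt_polarCoord_symm_radius
    (hu : DifferentiableAt ℝ u (polarCoord.symm (r, θ))) :
    HasDerivAt (fun r => u (polarCoord.symm (r, θ)))
      (fderiv ℝ u (polarCoord.symm (r, θ)) (cos θ, sin θ)) r := by
  have hc : HasDerivAt (fun r => polarCoord.symm (r, θ)) (cos θ, sin θ) r := by
    simpa only [polarCoord_symm_apply] using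
      (hasDerivAt_mul_const (cos θ)).prodMk (hasDerivAt_mul_const (sin θ))
  exact hu.hasFDerivAt.comp_hasDerivAt r hc

lemma norm_clm_apply_sq_le (L : ℝ × ℝ →L[ℝ] F) (v : ℝ × ℝ) :
    ‖L v‖ ^ 2 ≤ (v.1 ^ 2 + v.2 ^ 2) * (‖L (1, 0)‖ ^ 2 + ‖L (0, 1)‖ ^ 2) := by
  have hL : L v = v.1 • L (1, 0) + v.2 • L (0, 1) := by
    rw [← map_smul, ← map_smul, ← map_add]
    simp
  have htri : ‖L v‖ ≤ |v.1| * ‖L (1, 0)‖ + |v.2| * ‖L (0, 1)‖ := by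
    simpa only [hL, norm_smul, Real.norm_eq_abs] using
      norm_add_le (v.1 • L (1, 0)) (v.2 • L (0, 1))
  calc ‖L v‖ ^ 2 ≤ (|v.1| * ‖L (1, 0)‖ + |v.2| * ‖L (0, 1)‖) ^ 2 := by gcongr
    _ ≤ (|v.1| ^ 2 + |v.2| ^ 2) * (‖L (1, 0)‖ ^ 2 + ‖L (0, 1)‖ ^ 2) := by
      linarith [sq_nonneg (|v.1| * ‖L (0, 1)‖ - |v.2| * ‖L (1, 0)‖)]
    _ = (v.1 ^ 2 + v.2 ^ 2) * (‖L (1, 0)‖ ^ 2 + ‖L (0, 1)‖ ^ 2) := by rw [sq_abs, sq_abs]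

end NormedSpace

variable {E : Type*} [NormedAddCommGroup E] [InnerProductSpace ℝ E] {u : ℝ × ℝ → E} {a b r θ : ℝ}

lemma norm_sq_le_integral_circle (hu : ContDiff ℝ 1 u) (hθ : θ ∈ Icc (-π) π) :
    ‖u (polarCoord.symm (r, θ))‖ ^ 2 ≤ 2 * ∫ φ in -π..π,
      (‖u (polarCoord.symm (r, φ))‖ ^ 2 + ‖angularDeriv u (polarCoord.symm (r, φ))‖ ^ 2) := by
  have hΩ := continuous_angularDeriv hu
  have hlen : 1 + (π - -π)⁻¹ ≤ 2 := by
    linarith [inv_le_one_of_one_le₀ (show 1 ≤ π - -π by linarith [pi_gt_three])]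
  refine (norm_sq_le_mul_integral (by linarith [pi_pos])
    (fun φ _ => hasDerivAt_polarCoord_symm_angle (hu.differentiable one_ne_zero _))
    (Continuous.continuousOn (by fun_prop)) hθ).trans ?_
  gcongr
  exact intervalIntegral.integral_nonneg (neg_le_self pi_pos.le) fun φ _ => by positivity

lemma integral_ray_norm_sq_le (hu : ContDiff ℝ 1 u) (ha : 0 < a) (hab : a ≤ b)
    (hθ : θ ∈ Icc (-π) π) :
    ∫ r in a..b, ‖u (polarCoord.symm (r, θ))‖ ^ 2 ≤ 2 / a * angularEnergy u a b := by
  have huc := hu.continuous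
  have hΩ := continuous_angularDeriv hu
  rw [angularEnergy,
    setIntegral_annulus_eq_integral_integral ha hab (Continuous.continuousOn (by fun_prop)),
    ← intervalIntegral.integral_const_mul]
  refine intervalIntegral.integral_mono_on hab (Continuous.intervalIntegrable (by fun_prop) _ _)
    ((Continuous.const_mul ?_ _).intervalIntegrable _ _) fun r hr => ?_
  · exact intervalIntegral.continuous_parametric_intervalIntegral_of_continuous' (by fun_prop) _ _
  simp only [smul_eq_mul, intervalIntegral.integral_const_mul]
  set I := ∫ φ in -π..π,
    (‖u (polarCoord.symm (r, φ))‖ ^ 2 + ‖angularDeriv u (polarCoord.symm (r, φ))‖ ^ 2)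
  have hI : 0 ≤ I :=
    intervalIntegral.integral_nonneg (neg_le_self pi_pos.le) fun φ _ => by positivity
  calc ‖u (polarCoord.symm (r, θ))‖ ^ 2 ≤ 2 * I := norm_sq_le_integral_circle hu hθ
    _ ≤ r / a * (2 * I) := le_mul_of_one_le_left (by positivity) ((one_le_div ha).2 hr.1)
    _ = 2 / a * (r * I) := by ring

theorem norm_sq_le_norm_sq_outer_add_angularEnergy (hu : ContDiff ℝ 2 u) (ha : 0 < a)
    (hr : r ∈ Icc a b) (hθ : θ ∈ Icc (-π) π) :
    ‖u (polarCoord.symm (r, θ))‖ ^ 2 ≤ ‖u (polarCoord.symm (b, θ))‖ ^ 2 +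
      2 / a * (angularEnergy u a b + angularEnergy (fun y => fderiv ℝ u y (1, 0)) a b +
        angularEnergy (fun y => fderiv ℝ u y (0, 1)) a b) := by
  have hab : a ≤ b := hr.1.trans hr.2
  have hu1 : ContDiff ℝ 1 u := hu.of_le one_le_two
  have hdu : ContDiff ℝ 1 (fderiv ℝ u) := hu.fderiv_right (by norm_num)
  have huc := hu.continuous
  let γ (s : ℝ) : ℝ × ℝ := polarCoord.symm (s, θ)
  have hγ : Continuous γ := by fun_prop
  have hftc : ‖u (γ r)‖ ^ 2 ≤ ‖u (γ b)‖ ^ 2 +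
      ∫ s in a..b, (‖u (γ s)‖ ^ 2 + ‖fderiv ℝ u (γ s) (cos θ, sin θ)‖ ^ 2) :=
    norm_sq_le_norm_sq_add_integral
      (fun s _ => hasDerivAt_polarCoord_symm_radius (hu1.differentiable one_ne_zero _))
      (Continuous.continuousOn (by fun_prop)) hr (right_mem_Icc.2 hab)
  have hgrad : ∫ s in a..b, (‖u (γ s)‖ ^ 2 + ‖fderiv ℝ u (γ s) (cos θ, sin θ)‖ ^ 2) ≤
      ∫ s in a..b, (‖u (γ s)‖ ^ 2 +
        (‖fderiv ℝ u (γ s) (1, 0)‖ ^ 2 + ‖fderiv ℝ u (γ s) (0, 1)‖ ^ 2)) :=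
    intervalIntegral.integral_mono_on hab (Continuous.intervalIntegrable (by fun_prop) _ _)
      (Continuous.intervalIntegrable (by fun_prop) _ _)
      fun s _ => add_le_add_right (by
        simpa only [cos_sq_add_sin_sq, one_mul] using
          norm_clm_apply_sq_le (fderiv ℝ u (γ s)) (cos θ, sin θ)) _
  have hsplit : ∫ s in a..b, (‖u (γ s)‖ ^ 2 +
        (‖fderiv ℝ u (γ s) (1, 0)‖ ^ 2 + ‖fderiv ℝ u (γ s) (0, 1)‖ ^ 2)) =
      (∫ s in a..b, ‖u (γ s)‖ ^ 2) + ((∫ s in a..b, ‖fderiv ℝ u (γ s) (1, 0)‖ ^ 2) +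
        ∫ s in a..b, ‖fderiv ℝ u (γ s) (0, 1)‖ ^ 2) := by
    rw [intervalIntegral.integral_add, intervalIntegral.integral_add] <;>
      exact Continuous.intervalIntegrable (by fun_prop) _ _
  have hray {v : ℝ × ℝ → E} (hv : ContDiff ℝ 1 v) :
      ∫ s in a..b, ‖v (γ s)‖ ^ 2 ≤ 2 / a * angularEnergy v a b :=
    integral_ray_norm_sq_le hv ha hab hθ
  linarith [hray hu1, hray (hdu.clm_apply (contDiff_const (c := (1, 0)))),
    hray (hdu.clm_apply (contDiff_const (c := (0, 1))))]

end Planar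

section Spacetime

lemma fderiv_slice {E F G : Type*} [NormedAddCommGroup E] [NormedSpace ℝ E] [NormedAddCommGroup F]
    [NormedSpace ℝ F] [NormedAddCommGroup G] [NormedSpace ℝ G] {f : E × F → G} {t : E} {y : F}
    (hf : DifferentiableAt ℝ f (t, y)) (v : F) :
    fderiv ℝ (fun y => f (t, y)) y v = fderiv ℝ f (t, y) (0, v) :=
  DFunLike.congr_fun (hf.hasFDerivAt.comp y (hasFDerivAt_prodMk_right t y)).fderiv v

variable {f : ℝ × ℝ × ℝ → ℝ} {t δ : ℝ}

lemma angularDeriv_slice {y : ℝ × ℝ} (hf : DifferentiableAt ℝ f (t, y)) :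
    angularDeriv (fun y => f (t, y)) y = Om f (t, y) := by
  have hv : ((0, -y.2, y.1) : ℝ × ℝ × ℝ) = y.1 • (0, 0, 1) - y.2 • (0, 1, 0) := by simp
  rw [angularDeriv, fderiv_slice hf, hv, map_sub, map_smul, map_smul]
  rfl

lemma L2ann_nonneg (f : ℝ × ℝ × ℝ → ℝ) (t δ : ℝ) : 0 ≤ L2ann f t δ := sqrt_nonneg _

lemma L2ann_sq (f : ℝ × ℝ × ℝ → ℝ) (t δ : ℝ) :
    L2ann f t δ ^ 2 = ∫ y in annulus (t / 4) (t - 2 * δ), f (t, y) ^ 2 :=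
  sq_sqrt (integral_nonneg fun _ => sq_nonneg _)

lemma angularEnergy_slice (hf : ContDiff ℝ 1 f) (t δ : ℝ) :
    angularEnergy (fun y => f (t, y)) (t / 4) (t - 2 * δ) =
      L2ann f t δ ^ 2 + L2ann (Om f) t δ ^ 2 := by
  have hslice : ContDiff ℝ 1 fun y => f (t, y) := by fun_prop
  have hΩ := continuous_angularDeriv hslice
  have hint {h : ℝ × ℝ → ℝ} (hh : Continuous h) :
      IntegrableOn h (annulus (t / 4) (t - 2 * δ)) :=
    hh.continuousOn.integrableOn_compact (isCompact_annulus _ _)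
  simp only [L2ann_sq, ← angularDeriv_slice (hf.differentiable one_ne_zero _), angularEnergy,
    Real.norm_eq_abs, sq_abs]
  exact integral_add (hint (by fun_prop)) (hint (by fun_prop))

lemma sq_le_sq_outer_add_L2ann_sq (hf : ContDiff ℝ 2 f) (ht : 0 < t) {r θ : ℝ}
    (hr : r ∈ Icc (t / 4) (t - 2 * δ)) (hθ : θ ∈ Icc (-π) π) :
    f (t, polarCoord.symm (r, θ)) ^ 2 ≤ f (t, polarCoord.symm (t - 2 * δ, θ)) ^ 2 +
      8 / t * (L2ann f t δ ^ 2 + L2ann (Om f) t δ ^ 2 +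
        (L2ann (pd1 f) t δ ^ 2 + L2ann (Om (pd1 f)) t δ ^ 2) +
        (L2ann (pd2 f) t δ ^ 2 + L2ann (Om (pd2 f)) t δ ^ 2)) := by
  have hdf : ContDiff ℝ 1 (fderiv ℝ f) := hf.fderiv_right (by norm_num)
  have hslice : ContDiff ℝ 2 fun y => f (t, y) := by fun_prop
  have hpd1 : angularEnergy (fun y => fderiv ℝ f (t, y) (0, 1, 0)) (t / 4) (t - 2 * δ) =
      L2ann (pd1 f) t δ ^ 2 + L2ann (Om (pd1 f)) t δ ^ 2 :=
    angularEnergy_slice (hdf.clm_apply contDiff_const) t δ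
  have hpd2 : angularEnergy (fun y => fderiv ℝ f (t, y) (0, 0, 1)) (t / 4) (t - 2 * δ) =
      L2ann (pd2 f) t δ ^ 2 + L2ann (Om (pd2 f)) t δ ^ 2 :=
    angularEnergy_slice (hdf.clm_apply contDiff_const) t δ
  have hmain := norm_sq_le_norm_sq_outer_add_angularEnergy hslice (by positivity) hr hθ
  simp only [fderiv_slice (hf.differentiable two_ne_zero _)] at hmain
  rw [angularEnergy_slice (hf.of_le one_le_two), hpd1, hpd2,
    show 2 / (t / 4) = 8 / t by field_simp; norm_num] at hmain
  simpa only [Real.norm_eq_abs, sq_abs] using hmain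

end Spacetime

theorem stmt17_general {f : ℝ × ℝ × ℝ → ℝ} (hf : ContDiff ℝ 2 f) {t δ : ℝ} (ht : 0 < t)
    {x : ℝ × ℝ} (hx : (t / 4) ^ 2 ≤ x.1 ^ 2 + x.2 ^ 2)
    (hxb : √(x.1 ^ 2 + x.2 ^ 2) ≤ t - 2 * δ) :
    |f (t, x.1, x.2)| ≤
      3 * (|f (t, (t - 2 * δ) / √(x.1 ^ 2 + x.2 ^ 2) * x.1,
          (t - 2 * δ) / √(x.1 ^ 2 + x.2 ^ 2) * x.2)| +
        t ^ (-(1 : ℝ) / 2) * (L2ann f t δ + L2ann (pd1 f) t δ + L2ann (pd2 f) t δ +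
          L2ann (Om f) t δ + L2ann (Om (pd1 f)) t δ + L2ann (Om (pd2 f)) t δ)) := by
  obtain ⟨θ, hθ, hxθ⟩ := exists_polarCoord_symm_eq x
  set r := √(x.1 ^ 2 + x.2 ^ 2)
  have hr : t / 4 ≤ r := le_sqrt_of_sq_le hx
  have hmain := sq_le_sq_outer_add_L2ann_sq hf ht ⟨hr, hxb⟩ hθ
  rw [polarCoord_symm_eq_div_mul (r := r) (by linarith) (t - 2 * δ), hxθ] at hmain
  set A := f (t, (t - 2 * δ) / r * x.1, (t - 2 * δ) / r * x.2)
  set S := L2ann f t δ + L2ann (pd1 f) t δ + L2ann (pd2 f) t δ +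
    L2ann (Om f) t δ + L2ann (Om (pd1 f)) t δ + L2ann (Om (pd2 f)) t δ with hS
  have hS0 : 0 ≤ S := by
    linarith [L2ann_nonneg f t δ, L2ann_nonneg (pd1 f) t δ, L2ann_nonneg (pd2 f) t δ,
      L2ann_nonneg (Om f) t δ, L2ann_nonneg (Om (pd1 f)) t δ, L2ann_nonneg (Om (pd2 f)) t δ]
  have hsum := Finset.sum_sq_le_sq_sum_of_nonneg (s := .univ)
    (f := fun i => L2ann (![f, pd1 f, pd2 f, Om f, Om (pd1 f), Om (pd2 f)] i) t δ)
    fun i _ => L2ann_nonneg _ t δ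
  simp only [Fin.sum_univ_six, Matrix.cons_val, ← hS] at hsum
  have hpow : (t ^ (-(1 : ℝ) / 2)) ^ 2 = t⁻¹ := by
    rw [← rpow_mul_natCast ht.le]
    norm_num [rpow_neg_one]
  refine abs_le_of_sq_le_sq (hmain.trans ?_) (by positivity)
  calc _ ≤ A ^ 2 + 8 / t * S ^ 2 := by gcongr; linarith
    _ = |A| ^ 2 + 8 * (t ^ (-(1 : ℝ) / 2) * S) ^ 2 := by rw [sq_abs, mul_pow, hpow]; ring
    _ ≤ _ := by
      have hAS : 0 ≤ |A| * (t ^ (-(1 : ℝ) / 2) * S) := by positivity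
      linarith [sq_nonneg |A|, sq_nonneg (t ^ (-(1 : ℝ) / 2) * S)]

/-- Modified Klainerman–Sobolev inequality (outer region with boundary): for
`|x| ≥ t/4` with `t − |x| ≥ 2δ`,
`|f(t,x)| ≲ |f(t,B_t^x)| + t^{-1/2} ∑_{a≤1,|β|≤1}‖Ω^a∂^βf‖_{L²(t/4≤|y|≤t−2δ)}`,
where `B_t^x` is the radial projection of `x` to the boundary circle `|y| = t − 2δ`. -/
theorem stmt17 :
    ∃ C : ℝ, 0 < C ∧ ∀ f : ℝ × ℝ × ℝ → ℝ, ContDiff ℝ (⊤ : ℕ∞) f →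
      ∀ t δ : ℝ, 1 ≤ t → 0 < δ →
      ∀ x : ℝ × ℝ, (t / 4) ^ 2 ≤ x.1 ^ 2 + x.2 ^ 2 →
        Real.sqrt (x.1 ^ 2 + x.2 ^ 2) ≤ t - 2 * δ →
        |f (t, x.1, x.2)| ≤
          C * (|f (t, (t - 2 * δ) / Real.sqrt (x.1 ^ 2 + x.2 ^ 2) * x.1,
                    (t - 2 * δ) / Real.sqrt (x.1 ^ 2 + x.2 ^ 2) * x.2)| +
            t ^ (-(1 : ℝ) / 2) *
              (L2ann f t δ + L2ann (pdt f) t δ + L2ann (pd1 f) t δ + L2ann (pd2 f) t δ +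
               L2ann (Om f) t δ + L2ann (Om (pdt f)) t δ + L2ann (Om (pd1 f)) t δ +
               L2ann (Om (pd2 f)) t δ)) := by
  refine ⟨3, by norm_num, fun f hf t δ ht _ x hx hxb => ?_⟩
  refine (stmt17_general (hf.of_le (WithTop.coe_le_coe.2 le_top)) (by linarith) hx hxb).trans ?_
  gcongr 3 * (_ + t ^ _ * ?_)
  linarith [L2ann_nonneg (pdt f) t δ, L2ann_nonneg (Om (pdt f)) t δ]
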